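/- Let F be a Ferrers board in F_n with border vertices V_0,…,V_{2n} and height sequence h_0…h_{2n}, and let (R,F) be a 321-avoiding full rook placement. For 0 ≤ i ≤ 2n let ℓ_i be the length of the longest increasing subsequence of the permutation determined by R ∩ Γ(V_i), and set j_i = 2ℓ_i − h_i. Then j_0 = j_{2n} = 0, |j_{i+1} − j_i| = 1 for all 0 ≤ i < 2n, and 0 ≤ j_i ≤ h_i for all i; that is, j_0…j_{2n} is the height sequence of a Dyck path lying weakly below D_F. -/

import Mathlib

/-! ### Patterns of length 3 and 4 as permutations (0-indexed values) -/

def p123 : Equiv.Perm (Fin 3) :=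
  ⟨![0,1,2], ![0,1,2], by intro x; fin_cases x <;> rfl, by intro x; fin_cases x <;> rfl⟩
def p132 : Equiv.Perm (Fin 3) :=
  ⟨![0,2,1], ![0,2,1], by intro x; fin_cases x <;> rfl, by intro x; fin_cases x <;> rfl⟩
def p213 : Equiv.Perm (Fin 3) :=
  ⟨![1,0,2], ![1,0,2], by intro x; fin_cases x <;> rfl, by intro x; fin_cases x <;> rfl⟩
def p231 : Equiv.Perm (Fin 3) :=
  ⟨![1,2,0], ![2,0,1], by intro x; fin_cases x <;> rfl, by intro x; fin_cases x <;> rfl⟩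
def p312 : Equiv.Perm (Fin 3) :=
  ⟨![2,0,1], ![1,2,0], by intro x; fin_cases x <;> rfl, by intro x; fin_cases x <;> rfl⟩
def p321 : Equiv.Perm (Fin 3) :=
  ⟨![2,1,0], ![2,1,0], by intro x; fin_cases x <;> rfl, by intro x; fin_cases x <;> rfl⟩
def p1342 : Equiv.Perm (Fin 4) :=
  ⟨![0,2,3,1], ![0,3,1,2], by intro x; fin_cases x <;> rfl, by intro x; fin_cases x <;> rfl⟩
def p1324 : Equiv.Perm (Fin 4) :=
  ⟨![0,2,1,3], ![0,2,1,3], by intro x; fin_cases x <;> rfl, by intro x; fin_cases x <;> rfl⟩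

/-! ### Perfect matchings of `[2n] = {1, …, 2n}` as finsets of pairs `(i,j)`, `i < j` -/

/-- `M` is a perfect matching of `{1, …, 2n}`. -/
def IsPerfectMatching (n : ℕ) (M : Finset (ℕ × ℕ)) : Prop :=
  (∀ p ∈ M, p.1 < p.2 ∧ 1 ≤ p.1 ∧ p.2 ≤ 2 * n) ∧
  ∀ x, 1 ≤ x → x ≤ 2 * n → ∃! p, p ∈ M ∧ (p.1 = x ∨ p.2 = x)

/-- The matching `M` contains the pattern `τ ∈ S_k`: there are
`i_1 < i_2 < ⋯ < i_{2k}` with `(i_a, i_{2k+1-τ(a)}) ∈ M` for all `1 ≤ a ≤ k`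
(written here 0-indexed). -/
def MatchContains {k : ℕ} (τ : Equiv.Perm (Fin k)) (M : Finset (ℕ × ℕ)) : Prop :=
  ∃ f : Fin (2 * k) → ℕ, StrictMono f ∧
    ∀ a : Fin k,
      (f ⟨a.1, by have := a.isLt; omega⟩,
       f ⟨2 * k - 1 - (τ a).1, by have := (τ a).isLt; omega⟩) ∈ M

def MatchAvoids {k : ℕ} (τ : Equiv.Perm (Fin k)) (M : Finset (ℕ × ℕ)) : Prop :=
  ¬ MatchContains τ M

/-! ### Dyck paths as lists of booleans (`true` = east step, `false` = south step) -/

/-- A Dyck path of semilength `n`, from `(0,n)` to `(n,0)`, staying weakly above `y = n - x`. -/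
def IsDyckPath (n : ℕ) (t : List Bool) : Prop :=
  t.length = 2 * n ∧ t.count true = n ∧
  ∀ i, (t.take i).count false ≤ (t.take i).count true

/-- The height (distance above the diagonal) of the `i`-th vertex of the path `t`. -/
def pathHeight (t : List Bool) (i : ℕ) : ℤ :=
  ((t.take i).count true : ℤ) - ((t.take i).count false : ℤ)

/-- `s` lies weakly below `t` (for paths of the same semilength). -/
def WeaklyBelow (s t : List Bool) : Prop := ∀ i, pathHeight s i ≤ pathHeight t i

/-- The shape of a matching of `[2n]`: an east step for each opener, a south step for
each closer. -/
def shapeOf (n : ℕ) (M : Finset (ℕ × ℕ)) : List Bool :=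
  (List.range (2 * n)).map fun x => decide ((x + 1) ∈ M.image Prod.fst)

/-- Number of returns of a path: south steps ending on the diagonal. -/
def returnsOf (t : List Bool) : ℕ :=
  ((Finset.range t.length).filter fun i =>
    t[i]? = some false ∧ (t.take (i+1)).count true = (t.take (i+1)).count false).card

/-- Height sequence of a path, as natural numbers. -/
def hseq (t : List Bool) (i : ℕ) : ℕ := (t.take i).count true - (t.take i).count false

/-- `η(F)`: the number of indices `0 ≤ i ≤ 2n` with `h_i = 2`. -/
def etaOf (n : ℕ) (t : List Bool) : ℕ :=
  ((Finset.range (2 * n + 1)).filter fun i => hseq t i = 2).card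

/-! ### Full rook placements on Ferrers boards -/

/-- The square in column `c`, row `r` (both 1-indexed from the bottom left) belongs to the
Ferrers board with border path `t ∈ F_n`. -/
def InBoard (n : ℕ) (t : List Bool) (c r : ℕ) : Prop :=
  1 ≤ c ∧ 1 ≤ r ∧ ∃ i, c ≤ (t.take i).count true ∧ (t.take i).count false + r ≤ n

/-- `R` is a full rook placement on the Ferrers board with border path `t ∈ F_n`:
one rook in each of the `n` rows and `n` columns. -/
def IsFullRookPlacement (n : ℕ) (t : List Bool) (R : Finset (ℕ × ℕ)) : Prop :=
  (∀ p ∈ R, InBoard n t p.1 p.2) ∧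
  (∀ c, 1 ≤ c → c ≤ n → ∃! p, p ∈ R ∧ p.1 = c) ∧
  (∀ r, 1 ≤ r → r ≤ n → ∃! p, p ∈ R ∧ p.2 = r)

/-- The rooks of `R` lying in the rectangle `Γ(V_i)` determined by the `i`-th border vertex. -/
def rectRooks (n : ℕ) (t : List Bool) (R : Finset (ℕ × ℕ)) (i : ℕ) : Finset (ℕ × ℕ) :=
  R.filter fun p => p.1 ≤ (t.take i).count true ∧ p.2 + (t.take i).count false ≤ n

/-- Length of the longest increasing sequence (in both coordinates) in a finite point set. -/
def lisLen (S : Finset (ℕ × ℕ)) : ℕ :=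
  (S.powerset.filter fun T => ∀ p ∈ T, ∀ q ∈ T, p.1 < q.1 → p.2 < q.2).sup Finset.card

/-- The full rook placement `R` on the board with border `t ∈ F_n` contains the pattern `τ`:
some rectangle `Γ(V_i)` contains an occurrence of `τ`. -/
def PlacementContains {k : ℕ} (τ : Equiv.Perm (Fin k)) (n : ℕ) (t : List Bool)
    (R : Finset (ℕ × ℕ)) : Prop :=
  ∃ i ≤ 2 * n, ∃ f : Fin k → ℕ × ℕ,
    (∀ a, f a ∈ R ∧ (f a).1 ≤ (t.take i).count true ∧ (f a).2 + (t.take i).count false ≤ n) ∧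
    (∀ a b : Fin k, a < b → (f a).1 < (f b).1) ∧
    (∀ a b : Fin k, τ a < τ b → (f a).2 < (f b).2)

def PlacementAvoids {k : ℕ} (τ : Equiv.Perm (Fin k)) (n : ℕ) (t : List Bool)
    (R : Finset (ℕ × ℕ)) : Prop :=
  ¬ PlacementContains τ n t R

/-- `R` is board-minimal on the board with border `t`: every peak corner square holds a rook. -/
def BoardMinimal (n : ℕ) (t : List Bool) (R : Finset (ℕ × ℕ)) : Prop :=
  ∀ i, t[i]? = some true → t[i+1]? = some false →
    ((t.take (i+1)).count true, n - (t.take (i+1)).count false) ∈ R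

/-- Board-minimal full rook placements on boards of `F_n` avoiding the pattern `σ`,
recorded as pairs (border path, rook set). -/
def MinPlacements (n : ℕ) {k : ℕ} (σ : Equiv.Perm (Fin k)) :
    Set (List Bool × Finset (ℕ × ℕ)) :=
  {tR | IsDyckPath n tR.1 ∧ IsFullRookPlacement n tR.1 tR.2 ∧ BoardMinimal n tR.1 tR.2 ∧
        PlacementAvoids σ n tR.1 tR.2}

/-! ### Pattern avoidance in permutations -/

def PermContains {n k : ℕ} (τ : Equiv.Perm (Fin k)) (π : Equiv.Perm (Fin n)) : Prop :=
  ∃ f : Fin k → Fin n, StrictMono f ∧ ∀ a b : Fin k, τ a < τ b → π (f a) < π (f b)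

def PermAvoids {n k : ℕ} (τ : Equiv.Perm (Fin k)) (π : Equiv.Perm (Fin n)) : Prop :=
  ¬ PermContains τ π

/-- The full rook placement associated to a permutation of `[n]`. -/
def permPlacement {n : ℕ} (π : Equiv.Perm (Fin n)) : Finset (ℕ × ℕ) :=
  Finset.univ.image fun i : Fin n => ((i : ℕ) + 1, (π i : ℕ) + 1)

/-! ### Matchings with fixed points -/

/-- A (not necessarily perfect) matching on `{1, …, m}`: pairwise disjoint pairs. -/
def IsPartialMatching (m : ℕ) (M : Finset (ℕ × ℕ)) : Prop :=
  (∀ p ∈ M, p.1 < p.2 ∧ 1 ≤ p.1 ∧ p.2 ≤ m) ∧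
  ∀ p ∈ M, ∀ q ∈ M, p ≠ q → p.1 ≠ q.1 ∧ p.1 ≠ q.2 ∧ p.2 ≠ q.1 ∧ p.2 ≠ q.2

/-- The fixed points (unmatched vertices) of a matching on `{1, …, m}`. -/
def fixedPts (m : ℕ) (M : Finset (ℕ × ℕ)) : Finset ℕ :=
  (Finset.Icc 1 m).filter fun x => ∀ p ∈ M, p.1 ≠ x ∧ p.2 ≠ x

/-- The matched vertices of a matching on `{1, …, m}`. -/
def matchedSet (m : ℕ) (M : Finset (ℕ × ℕ)) : Finset ℕ :=
  (Finset.Icc 1 m).filter fun x => ∃ p ∈ M, p.1 = x ∨ p.2 = x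

/-- The rank (1-based) of `x` inside the finset `S`. -/
def rankIn (S : Finset ℕ) (x : ℕ) : ℕ := (S.filter (· ≤ x)).card

/-- The matching obtained by removing the fixed points and relabeling increasingly. -/
def relabeled (m : ℕ) (M : Finset (ℕ × ℕ)) : Finset (ℕ × ℕ) :=
  M.image fun p => (rankIn (matchedSet m M) p.1, rankIn (matchedSet m M) p.2)

/-! ### Set partitions -/

/-- `(i,j)` is an arc of the set partition `P` of `{1, …, n}`: `i < j` lie in a common block
with no element of that block strictly between them. -/
def PartArc {n : ℕ} (P : Finpartition (Finset.Icc 1 n)) (i j : ℕ) : Prop :=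
  i < j ∧ ∃ B ∈ P.parts, i ∈ B ∧ j ∈ B ∧ ∀ x ∈ B, ¬(i < x ∧ x < j)

/-- The set partition `P` contains the pattern `τ ∈ S_k`. -/
def PartContains {k n : ℕ} (τ : Equiv.Perm (Fin k)) (P : Finpartition (Finset.Icc 1 n)) : Prop :=
  ∃ f : Fin (2 * k) → ℕ, StrictMono f ∧
    ∀ a : Fin k,
      PartArc P (f ⟨a.1, by have := a.isLt; omega⟩)
        (f ⟨2 * k - 1 - (τ a).1, by have := (τ a).isLt; omega⟩)

def PartAvoids {k n : ℕ} (τ : Equiv.Perm (Fin k)) (P : Finpartition (Finset.Icc 1 n)) : Prop :=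
  ¬ PartContains τ P

/-! ### Counting functions -/

/-- `|M_n(τ)|`: the number of `τ`-avoiding perfect matchings of `[2n]`. -/
noncomputable def mcount {k : ℕ} (τ : Equiv.Perm (Fin k)) (n : ℕ) : ℕ :=
  {M : Finset (ℕ × ℕ) | IsPerfectMatching n M ∧ MatchAvoids τ M}.ncard

/-- `|M_n(σ,τ)|`: the number of perfect matchings of `[2n]` avoiding both `σ` and `τ`. -/
noncomputable def mcount2 {k : ℕ} (σ τ : Equiv.Perm (Fin k)) (n : ℕ) : ℕ :=
  {M : Finset (ℕ × ℕ) | IsPerfectMatching n M ∧ MatchAvoids σ M ∧ MatchAvoids τ M}.ncard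

/-- `|P_n(τ)|`: the number of `τ`-avoiding set partitions of `[n]`. -/
noncomputable def pcount {k : ℕ} (τ : Equiv.Perm (Fin k)) (n : ℕ) : ℕ :=
  Nat.card {P : Finpartition (Finset.Icc 1 n) // PartAvoids τ P}

/-- `|P_n(σ,τ)|`: the number of set partitions of `[n]` avoiding both `σ` and `τ`. -/
noncomputable def pcount2 {k : ℕ} (σ τ : Equiv.Perm (Fin k)) (n : ℕ) : ℕ :=
  Nat.card {P : Finpartition (Finset.Icc 1 n) // PartAvoids σ P ∧ PartAvoids τ P}

/-- `|S_n(τ)|`: the number of `τ`-avoiding permutations of `[n]`. -/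
noncomputable def scount {k : ℕ} (τ : Equiv.Perm (Fin k)) (n : ℕ) : ℕ :=
  Nat.card {π : Equiv.Perm (Fin n) // PermAvoids τ π}

/-!
Every rook lies left of `V_i` or below it, so inclusion–exclusion for these two conditions gives
`|R ∩ Γ(V_i)| = h_i`. Hence `j_i = 2ℓ(S) - |S|` with `S = R ∩ Γ(V_i)`, and everything
follows from the behaviour of this quantity: adding one point to `S` changes `|S|` by `1` and `ℓ(S)`
by `0` or `1`, hence changes it by `±1`; it is at most `|S|` because `ℓ(S) ≤ |S|`; and it is
nonnegative because a `321`-avoiding `S` is the union of two increasing sequences, its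
left-to-right maxima and the remaining points. The end values vanish since `h_0 = h_{2n} = 0`.
-/

/-- A set of points is increasing if, of two points in different columns, the right one is strictly
higher; this is the condition maximised by `lisLen`. Points in one column are not compared. -/
def IsIncreasing (T : Finset (ℕ × ℕ)) : Prop :=
  ∀ p ∈ T, ∀ q ∈ T, p.1 < q.1 → p.2 < q.2

/-- A set of points avoids the pattern `321`: no three points descend strictly from left to
right. -/
def Avoids321 (S : Finset (ℕ × ℕ)) : Prop :=
  ∀ p ∈ S, ∀ q ∈ S, ∀ r ∈ S, p.1 < q.1 → q.1 < r.1 → ¬ (r.2 < q.2 ∧ q.2 < p.2)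

/-- The left-to-right maxima of a point set: the points with no strictly higher point strictly to
their left. -/
def ltrMaxima (S : Finset (ℕ × ℕ)) : Finset (ℕ × ℕ) :=
  S.filter fun q => ∀ p ∈ S, p.1 < q.1 → p.2 ≤ q.2

/-- The quantity `2ℓ(S) - |S|`. For `S = R ∩ Γ(V_i)` it is the `j_i` of the theorem. -/
def lisExcess (S : Finset (ℕ × ℕ)) : ℤ :=
  2 * (lisLen S : ℤ) - S.card

section PointSets

variable {S S' T : Finset (ℕ × ℕ)}

theorem IsIncreasing.mono (hT : IsIncreasing T) (h : S ⊆ T) : IsIncreasing S :=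
  fun p hp q hq => hT p (h hp) q (h hq)

theorem lisLen_le_iff {k : ℕ} :
    lisLen S ≤ k ↔ ∀ T ⊆ S, IsIncreasing T → T.card ≤ k := by
  simp only [lisLen, Finset.sup_le_iff, Finset.mem_filter, Finset.mem_powerset, and_imp,
    IsIncreasing]

theorem IsIncreasing.card_le_lisLen (hT : IsIncreasing T) (h : T ⊆ S) : T.card ≤ lisLen S :=
  lisLen_le_iff.1 le_rfl T h hT

theorem lisLen_le_card : lisLen S ≤ S.card :=
  lisLen_le_iff.2 fun _ hT _ => Finset.card_le_card hT

theorem lisLen_le_lisLen_add_card_sdiff (S S' : Finset (ℕ × ℕ)) :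
    lisLen S' ≤ lisLen S + (S' \ S).card := by
  refine lisLen_le_iff.2 fun T hTS' hT => ?_
  calc T.card = (T ∩ S).card + (T \ S).card := (Finset.card_inter_add_card_sdiff T S).symm
    _ ≤ lisLen S + (S' \ S).card :=
      add_le_add ((hT.mono Finset.inter_subset_left).card_le_lisLen Finset.inter_subset_right)
        (Finset.card_le_card (Finset.sdiff_subset_sdiff hTS' le_rfl))

theorem lisLen_mono (h : S ⊆ S') : lisLen S ≤ lisLen S' := by
  simpa only [Finset.sdiff_eq_empty_iff_subset.2 h, Finset.card_empty, add_zero]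
    using lisLen_le_lisLen_add_card_sdiff S' S

theorem lisExcess_le_card : lisExcess S ≤ S.card := by
  have := lisLen_le_card (S := S)
  unfold lisExcess
  omega

theorem abs_lisExcess_sub_of_covBy (h : S ⋖ S') : |lisExcess S' - lisExcess S| = 1 := by
  obtain ⟨hsub, hcard⟩ := Finset.covBy_iff_card_sdiff_eq_one.1 h
  have hlower := lisLen_mono hsub
  have hupper := lisLen_le_lisLen_add_card_sdiff S S'
  have hsum := Finset.card_sdiff_add_card_eq_card hsub
  rw [abs_eq zero_le_one]
  unfold lisExcess
  omega

theorem isIncreasing_ltrMaxima (hrow : Set.InjOn Prod.snd (S : Set (ℕ × ℕ))) :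
    IsIncreasing (ltrMaxima S) := by
  intro p hp q hq hpq
  obtain ⟨hpS, -⟩ := Finset.mem_filter.1 hp
  obtain ⟨hqS, hqmax⟩ := Finset.mem_filter.1 hq
  refine (hqmax p hpS hpq).lt_of_ne fun heq => hpq.ne ?_
  rw [hrow hpS hqS heq]

theorem Avoids321.isIncreasing_sdiff_ltrMaxima (hS : Avoids321 S)
    (hrow : Set.InjOn Prod.snd (S : Set (ℕ × ℕ))) : IsIncreasing (S \ ltrMaxima S) := by
  intro q hq r hr hqr
  obtain ⟨hqS, hqmax⟩ := Finset.mem_sdiff.1 hq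
  have hrS := (Finset.mem_sdiff.1 hr).1
  obtain ⟨p, hpS, hpq, hqp⟩ : ∃ p ∈ S, p.1 < q.1 ∧ q.2 < p.2 := by
    simpa [ltrMaxima, hqS] using hqmax
  have hle : q.2 ≤ r.2 := not_lt.1 fun hrq => hS p hpS q hqS r hrS hpq hqr ⟨hrq, hqp⟩
  refine hle.lt_of_ne fun heq => hqr.ne ?_
  rw [hrow hqS hrS heq]

theorem Avoids321.lisExcess_nonneg (hS : Avoids321 S)
    (hrow : Set.InjOn Prod.snd (S : Set (ℕ × ℕ))) : 0 ≤ lisExcess S := by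
  have hsub : ltrMaxima S ⊆ S := Finset.filter_subset _ _
  have hmax := (isIncreasing_ltrMaxima hrow).card_le_lisLen hsub
  have hrest := (hS.isIncreasing_sdiff_ltrMaxima hrow).card_le_lisLen Finset.sdiff_subset
  have hsum := Finset.card_sdiff_add_card_eq_card hsub
  unfold lisExcess
  omega

end PointSets

section FiniteSets

variable {α β : Type*}

theorem covBy_of_subset_of_card_eq_add_one {s s' : Finset α} (h : s ⊆ s')
    (hcard : s'.card = s.card + 1) : s ⋖ s' := by
  classical
  refine Finset.covBy_iff_card_sdiff_eq_one.2 ⟨h, ?_⟩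
  rw [Finset.card_sdiff_of_subset h, hcard, Nat.add_sub_cancel_left]

theorem bijOn_of_existsUnique {f : α → β} {s : Set α} {u : Set β} (hmaps : Set.MapsTo f s u)
    (h : ∀ y ∈ u, ∃! x, x ∈ s ∧ f x = y) : Set.BijOn f s u :=
  ⟨hmaps, fun x hx _ hx' heq => (h (f x) (hmaps hx)).unique ⟨hx, rfl⟩ ⟨hx', heq.symm⟩,
    fun y hy => (h y hy).exists⟩

theorem card_filter_le_of_bijOn_Icc {f : α → ℕ} {s : Finset α} {n a : ℕ}
    (hf : Set.BijOn f s (Set.Icc 1 n)) (ha : a ≤ n) : (s.filter fun x => f x ≤ a).card = a := by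
  have himage : (s.filter fun x => f x ≤ a).image f = Finset.Icc 1 a := by
    ext y
    simp only [Finset.mem_image, Finset.mem_filter, Finset.mem_Icc]
    constructor
    · rintro ⟨x, ⟨hx, hxa⟩, rfl⟩
      exact ⟨(hf.mapsTo hx).1, hxa⟩
    · rintro ⟨hy, hya⟩
      obtain ⟨x, hx, rfl⟩ := hf.surjOn ⟨hy, hya.trans ha⟩
      exact ⟨x, ⟨hx, hya⟩, rfl⟩
  have hinj : Set.InjOn f (s.filter fun x => f x ≤ a : Finset α) :=
    hf.injOn.mono (Finset.coe_subset.2 (Finset.filter_subset _ _))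
  rw [← Finset.card_image_of_injOn hinj, himage, Nat.card_Icc, Nat.add_sub_cancel]

end FiniteSets

section Paths

variable {n i : ℕ} {t : List Bool}

theorem count_take_mono (t : List Bool) (b : Bool) : Monotone fun i => (t.take i).count b :=
  fun _ _ h => (List.take_prefix_take_left h).sublist.count_le b

theorem count_take_succ (hi : i < t.length) (b : Bool) :
    (t.take (i + 1)).count b = (t.take i).count b + if t[i] = b then 1 else 0 := by
  rw [List.take_succ_eq_append_getElem hi, List.count_append, List.count_singleton]
  simp only [beq_iff_eq]

theorem pathHeight_zero (t : List Bool) : pathHeight t 0 = 0 := by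
  simp [pathHeight]

theorem IsDyckPath.count_true_take_le (ht : IsDyckPath n t) (i : ℕ) :
    (t.take i).count true ≤ n :=
  ((List.take_sublist i t).count_le true).trans ht.2.1.le

theorem IsDyckPath.count_false_take_le (ht : IsDyckPath n t) (i : ℕ) :
    (t.take i).count false ≤ n :=
  (ht.2.2 i).trans (ht.count_true_take_le i)

theorem IsDyckPath.pathHeight_two_mul (ht : IsDyckPath n t) : pathHeight t (2 * n) = 0 := by
  obtain ⟨hlen, htrue, -⟩ := ht
  have hsum := List.count_true_add_count_false t
  rw [pathHeight, ← hlen, List.take_length]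
  omega

end Paths

section Placements

variable {n i : ℕ} {t : List Bool} {R : Finset (ℕ × ℕ)}

theorem InBoard.le_count_true_or_add_count_false_le {c r : ℕ} (h : InBoard n t c r) (i : ℕ) :
    c ≤ (t.take i).count true ∨ r + (t.take i).count false ≤ n := by
  obtain ⟨-, -, k, hc, hr⟩ := h
  rcases le_total k i with hki | hik
  · exact .inl (hc.trans (count_take_mono t true hki))
  · have hfalse : (t.take i).count false ≤ (t.take k).count false := count_take_mono t false hik
    exact .inr (by omega)

theorem IsFullRookPlacement.bijOn_snd (hR : IsFullRookPlacement n t R) :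
    Set.BijOn Prod.snd (R : Set (ℕ × ℕ)) (Set.Icc 1 n) := by
  refine bijOn_of_existsUnique (fun p hp => ?_) fun r hr => hR.2.2 r hr.1 hr.2
  obtain ⟨-, hpos, k, -, hle⟩ := hR.1 p hp
  exact ⟨hpos, by omega⟩

theorem IsFullRookPlacement.card_eq (hR : IsFullRookPlacement n t R) : R.card = n := by
  have hbij := hR.bijOn_snd
  rw [← Finset.coe_Icc] at hbij
  rw [hbij.finsetCard_eq, Nat.card_Icc, Nat.add_sub_cancel]

theorem IsFullRookPlacement.bijOn_fst (hR : IsFullRookPlacement n t R) (ht : IsDyckPath n t) :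
    Set.BijOn Prod.fst (R : Set (ℕ × ℕ)) (Set.Icc 1 n) := by
  refine bijOn_of_existsUnique (fun p hp => ?_) fun c hc => hR.2.1 c hc.1 hc.2
  obtain ⟨hpos, -, k, hle, -⟩ := hR.1 p hp
  exact ⟨hpos, hle.trans (ht.count_true_take_le k)⟩

theorem IsFullRookPlacement.injOn_snd_rectRooks (hR : IsFullRookPlacement n t R) (i : ℕ) :
    Set.InjOn Prod.snd (rectRooks n t R i : Set (ℕ × ℕ)) :=
  hR.bijOn_snd.injOn.mono (Finset.coe_subset.2 (Finset.filter_subset _ _))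

theorem rectRooks_subset_rectRooks {k : ℕ} (htrue : (t.take i).count true ≤ (t.take k).count true)
    (hfalse : (t.take k).count false ≤ (t.take i).count false) :
    rectRooks n t R i ⊆ rectRooks n t R k :=
  Finset.monotone_filter_right R fun _ _ hp =>
    ⟨hp.1.trans htrue, (Nat.add_le_add_left hfalse _).trans hp.2⟩

theorem IsFullRookPlacement.card_rectRooks (hR : IsFullRookPlacement n t R)
    (ht : IsDyckPath n t) (i : ℕ) : ((rectRooks n t R i).card : ℤ) = pathHeight t i := by
  unfold pathHeight
  set east := (t.take i).count true
  set south := (t.take i).count false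
  have hsouth_le : south ≤ n := ht.count_false_take_le i
  have hleft : (R.filter fun p => p.1 ≤ east).card = east :=
    card_filter_le_of_bijOn_Icc (hR.bijOn_fst ht) (ht.count_true_take_le i)
  have hbelow : (R.filter fun p => p.2 + south ≤ n).card = n - south := by
    simp only [← Nat.le_sub_iff_add_le hsouth_le]
    exact card_filter_le_of_bijOn_Icc hR.bijOn_snd (Nat.sub_le n south)
  have hunion : (R.filter fun p => p.1 ≤ east) ∪ (R.filter fun p => p.2 + south ≤ n) = R := by
    rw [← Finset.filter_or]
    exact Finset.filter_true_of_mem fun p hp =>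
      (hR.1 p hp).le_count_true_or_add_count_false_le i
  have hinter : (R.filter fun p => p.1 ≤ east) ∩ (R.filter fun p => p.2 + south ≤ n)
      = rectRooks n t R i := (Finset.filter_and _ _ R).symm
  have hincl := Finset.card_union_add_card_inter
    (R.filter fun p => p.1 ≤ east) (R.filter fun p => p.2 + south ≤ n)
  rw [hunion, hinter, hR.card_eq, hleft, hbelow] at hincl
  omega

theorem IsFullRookPlacement.rectRooks_covBy_or_covBy (hR : IsFullRookPlacement n t R)
    (ht : IsDyckPath n t) (hi : i < 2 * n) :
    rectRooks n t R i ⋖ rectRooks n t R (i + 1) ∨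
      rectRooks n t R (i + 1) ⋖ rectRooks n t R i := by
  have hlt : i < t.length := hi.trans_eq ht.1.symm
  have hcard := hR.card_rectRooks ht i
  have hcard_succ := hR.card_rectRooks ht (i + 1)
  have htrue := count_take_succ hlt true
  have hfalse := count_take_succ hlt false
  unfold pathHeight at hcard hcard_succ
  cases hstep : t[i] with
  | true =>
    simp only [hstep, reduceCtorEq, if_true, if_false] at htrue hfalse
    have hsub := rectRooks_subset_rectRooks (n := n) (R := R) (Nat.le.intro htrue.symm) hfalse.le
    exact .inl (covBy_of_subset_of_card_eq_add_one hsub (by omega))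
  | false =>
    simp only [hstep, reduceCtorEq, if_true, if_false] at htrue hfalse
    have hsub := rectRooks_subset_rectRooks (n := n) (R := R) htrue.le (Nat.le.intro hfalse.symm)
    exact .inr (covBy_of_subset_of_card_eq_add_one hsub (by omega))

theorem PlacementAvoids.avoids321_rectRooks (hav : PlacementAvoids p321 n t R)
    (hi : i ≤ 2 * n) : Avoids321 (rectRooks n t R i) := by
  rintro p hp q hq r hr hpq hqr ⟨hrq, hqp⟩
  have hcols : StrictMono fun a => (![p, q, r] a).1 :=
    Fin.strictMono_iff_lt_succ.2 (Fin.forall_fin_two.2 ⟨hpq, hqr⟩)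
  have hrows : StrictAnti fun a => (![p, q, r] a).2 :=
    Fin.strictAnti_iff_succ_lt.2 (Fin.forall_fin_two.2 ⟨hqp, hrq⟩)
  have hreverse : ∀ a b, p321 a < p321 b → b < a := by decide
  refine hav ⟨i, hi, ![p, q, r], fun a => ?_, fun _ _ hab => hcols hab,
    fun a b hab => hrows (hreverse a b hab)⟩
  fin_cases a
  exacts [Finset.mem_filter.1 hp, Finset.mem_filter.1 hq, Finset.mem_filter.1 hr]

end Placements

/-- For a `321`-avoiding full rook placement `(R,F)` on a board `F ∈ F_n`,
the sequence `j_i = 2ℓ_i − h_i` is the height sequence of a Dyck path lying weakly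
below `D_F`. -/
theorem lis_sequence_is_dyck_below
    (n : ℕ) (t : List Bool) (ht : IsDyckPath n t)
    (R : Finset (ℕ × ℕ)) (hR : IsFullRookPlacement n t R)
    (hav : PlacementAvoids p321 n t R)
    (j : ℕ → ℤ) (hj : ∀ i, j i = 2 * (lisLen (rectRooks n t R i) : ℤ) - pathHeight t i) :
    j 0 = 0 ∧ j (2 * n) = 0 ∧ (∀ i, i < 2 * n → |j (i + 1) - j i| = 1) ∧
    ∀ i, i ≤ 2 * n → 0 ≤ j i ∧ j i ≤ pathHeight t i := by
  have hheight := hR.card_rectRooks ht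
  have hexcess : ∀ i, j i = lisExcess (rectRooks n t R i) := fun i => by
    rw [hj, ← hheight, lisExcess]
  have hbounds : ∀ i, i ≤ 2 * n → 0 ≤ j i ∧ j i ≤ pathHeight t i := fun i hi => by
    rw [hexcess, ← hheight]
    exact ⟨(hav.avoids321_rectRooks hi).lisExcess_nonneg (hR.injOn_snd_rectRooks i),
      lisExcess_le_card⟩
  have hsteps : ∀ i, i < 2 * n → |j (i + 1) - j i| = 1 := fun i hi => by
    rw [hexcess, hexcess]
    rcases hR.rectRooks_covBy_or_covBy ht hi with hup | hdown
    · exact abs_lisExcess_sub_of_covBy hup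
    · rw [abs_sub_comm]
      exact abs_lisExcess_sub_of_covBy hdown
  have hstart := hbounds 0 (Nat.zero_le _)
  have hend := hbounds (2 * n) le_rfl
  rw [pathHeight_zero] at hstart
  rw [ht.pathHeight_two_mul] at hend
  exact ⟨hstart.2.antisymm hstart.1, hend.2.antisymm hend.1, hsteps, hbounds⟩
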